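/- Let G be a finite group acting on the rational function field K(x_1,…,x_n) over a field K by a linear representation, i.e., σ(x_i) = Σ_{j=1}^n a_{ij}(σ) x_j with a_{ij}(σ) ∈ K for every σ ∈ G. Let x_{n+1} be an additional variable on which G acts trivially. If K(x_1,…,x_n)^G is K-rational, then K(x_1,…,x_n,x_{n+1})^G is K-rational and can be generated over K by n+1 rational functions that are homogeneous of degree 1 in the variables x_1,…,x_{n+1}. -/

import Mathlib

noncomputable section

/-- The rational function field `K(x_i : i ∈ I)` over `K`, realized as the fraction field
of the multivariate polynomial ring. -/
abbrev RFF (K : Type) [Field K] (I : Type) := FractionRing (MvPolynomial I K)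

/-- The image of the variable `x_i` in the rational function field `K(x_i : i ∈ I)`. -/
noncomputable def Xvar (K : Type) [Field K] (I : Type) (i : I) : RFF K I :=
  algebraMap (MvPolynomial I K) (RFF K I) (MvPolynomial.X i)

/-- Permutations of the variables as `K`-algebra automorphisms of the polynomial ring. -/
def renameHom (K : Type) [Field K] (I : Type) :
    Equiv.Perm I →* (MvPolynomial I K ≃ₐ[K] MvPolynomial I K) where
  toFun σ := MvPolynomial.renameEquiv K σ
  map_one' := MvPolynomial.renameEquiv_refl K
  map_mul' σ τ := (MvPolynomial.renameEquiv_trans K τ σ).symm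

/-- The action of permutations of the variables on `K(x_i : i ∈ I)` by `K`-automorphisms,
determined by `σ(x_i) = x_{σ(i)}`. -/
noncomputable def permHom (K : Type) [Field K] (I : Type) :
    Equiv.Perm I →* (RFF K I ≃ₐ[K] RFF K I) :=
  (IsFractionRing.fieldEquivOfAlgEquivHom K (RFF K I)).comp (renameHom K I)

/-- The fixed field `K(x_i : i ∈ I)^G` of a group `G` of permutations of the variables. -/
noncomputable def fixedSub (K : Type) [Field K] (I : Type) (G : Subgroup (Equiv.Perm I)) :
    IntermediateField K (RFF K I) :=
  IntermediateField.fixedField (G.map (permHom K I))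

/-- An extension `L/K` is `K`-rational if it is purely transcendental over `K`, i.e. generated
by finitely many algebraically independent elements. -/
def IsRatExt (K : Type) [Field K] (L : Type*) [Field L] [Algebra K L] : Prop :=
  ∃ (n : ℕ) (t : Fin n → L), AlgebraicIndependent K t ∧
    IntermediateField.adjoin K (Set.range t) = ⊤

/-- A rational function `f ∈ K(x_i : i ∈ I)` is homogeneous of degree `d ∈ ℤ` if it is a
quotient of two homogeneous polynomials whose degrees differ by `d`. -/
def IsHomogRat (K : Type) [Field K] (I : Type) (f : RFF K I) (d : ℤ) : Prop :=
  ∃ (a b : ℕ) (p q : MvPolynomial I K), p.IsHomogeneous a ∧ q.IsHomogeneous b ∧ q ≠ 0 ∧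
    (a : ℤ) - (b : ℤ) = d ∧
    f = algebraMap (MvPolynomial I K) (RFF K I) p / algebraMap (MvPolynomial I K) (RFF K I) q

/-!
Write `F = K(x₁,…,xₙ)` and `z = x_{n+1}`. An invariant in `F(z)` is a unique reduced fraction of
polynomials in `z` with monic denominator, so the coefficients of the two polynomials are invariant:
`F(z)^G = F^G(z)`, which is rational because `F^G` is. The automorphism `Φ` that sends `x_i` to
`x_i / z` for `i ≤ n` and fixes `z` commutes with `G`, since `G` acts linearly. It therefore
preserves `F(z)^G = K(t₁,…,t_m, z)`, which is thus also `K(Φ t₁,…,Φ t_m, z)`. Each `Φ t_j` is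
homogeneous of degree `0`, and the generators `z Φ t₁,…,z Φ t_m, z` have degree `1`.
-/

section FixedFields
open IntermediateField Polynomial

lemma eq_and_eq_of_isCoprime_of_monic {F : Type*} [Field F] {p q p' q' : F[X]}
    (h : IsCoprime p q) (h' : IsCoprime p' q') (hq : q.Monic) (hq' : q'.Monic)
    (heq : p * q' = p' * q) : p = p' ∧ q = q' := by
  have hqq' : q = q' := eq_of_monic_of_associated hq hq' <| associated_of_dvd_dvd
    (h.symm.dvd_of_dvd_mul_left (heq ▸ dvd_mul_left q p'))
    (h'.symm.dvd_of_dvd_mul_left (heq ▸ dvd_mul_left q' p))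
  subst hqq'
  exact ⟨mul_right_cancel₀ hq.ne_zero heq, rfl⟩

lemma exists_isCoprime_monic_aeval_div_eq {F L : Type*} [Field F] [Field L] [Algebra F L] {z x : L}
    (hz : Transcendental F z) (hx : x ∈ F⟮z⟯) :
    ∃ p q : F[X], IsCoprime p q ∧ q.Monic ∧ aeval z p / aeval z q = x := by
  obtain ⟨u, hu⟩ := (RatFunc.algEquivOfTranscendental z hz).surjective ⟨x, hx⟩
  refine ⟨u.num, u.denom, RatFunc.isCoprime_num_denom u, RatFunc.monic_denom u, ?_⟩
  rw [← RatFunc.algEquivOfTranscendental_apply z hz, hu]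

variable {K L : Type*} [Field K] [Field L] [Algebra K L]

lemma map_aeval_eq_aeval_map_restrict {F : IntermediateField K L} {g : Gal(L/K)}
    (hF : ∀ x ∈ F, g x ∈ F) (z : L) (p : F[X]) :
    g (aeval z p) = aeval (g z) (p.map ((g : L →+* L).restrict F F hF)) := by
  rw [aeval_def, aeval_def, eval₂_map]
  exact hom_eval₂ p (algebraMap F L) (g : L →+* L) z

lemma map_coeff_eq_of_map_aeval_div_eq {F : IntermediateField K L} {z : L} (hz : Transcendental F z)
    {g : Gal(L/K)} (hF : ∀ x ∈ F, g x ∈ F) (hgz : g z = z) {p q : F[X]} (hpq : IsCoprime p q)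
    (hq : q.Monic) (hg : g (aeval z p / aeval z q) = aeval z p / aeval z q) (k : ℕ) :
    g (p.coeff k) = p.coeff k ∧ g (q.coeff k) = q.coeff k := by
  let σ : F →+* F := (g : L →+* L).restrict F F hF
  have aeval_ne_zero {r : F[X]} (hr : r.Monic) : aeval z r ≠ 0 :=
    fun h0 => hr.ne_zero ((transcendental_iff.mp hz) r h0)
  rw [map_div₀, map_aeval_eq_aeval_map_restrict hF, map_aeval_eq_aeval_map_restrict hF, hgz,
    div_eq_div_iff (aeval_ne_zero (hq.map σ)) (aeval_ne_zero hq), ← map_mul, ← map_mul] at hg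
  obtain ⟨hp', hq'⟩ := eq_and_eq_of_isCoprime_of_monic (hpq.map (mapRingHom σ)) hpq (hq.map σ) hq
    (transcendental_iff_injective.mp hz hg)
  have coeff_fixed {r : F[X]} (hr : r.map σ = r) : g (r.coeff k) = r.coeff k := by
    conv_rhs => rw [← hr, coeff_map]
    rfl
  exact ⟨coeff_fixed hp', coeff_fixed hq'⟩

lemma fixedField_inf_sup_adjoin_simple {H : Subgroup Gal(L/K)} {F : IntermediateField K L} {z : L}
    (hF : ∀ g ∈ H, ∀ x ∈ F, g x ∈ F) (hHz : z ∈ fixedField H) (hz : Transcendental F z) :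
    fixedField H ⊓ (F ⊔ K⟮z⟯) = fixedField H ⊓ F ⊔ K⟮z⟯ := by
  refine le_antisymm ?_ (sup_le (inf_le_inf_left _ le_sup_left)
    (le_inf (adjoin_simple_le_iff.mpr hHz) le_sup_right))
  rintro x ⟨hxH, hx⟩
  rw [SetLike.mem_coe, ← restrictScalars_adjoin_eq_sup, mem_restrictScalars] at hx
  obtain ⟨p, q, hpq, hq, rfl⟩ := exists_isCoprime_monic_aeval_div_eq hz hx
  have coeff_fixed (k : ℕ) (g : Gal(L/K)) (hg : g ∈ H) :=
    map_coeff_eq_of_map_aeval_div_eq hz (hF g hg) ((mem_fixedField_iff _ _).mp hHz g hg) hpq hq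
      ((mem_fixedField_iff _ _).mp hxH g hg) k
  have aeval_mem (r : F[X]) (hr : ∀ k, ∀ g ∈ H, g (r.coeff k) = r.coeff k) :
      aeval z r ∈ fixedField H ⊓ F ⊔ K⟮z⟯ := by
    rw [aeval_eq_sum_range]
    refine sum_mem fun k _ => mul_mem ?_ (pow_mem ?_ k)
    · exact le_sup_left (a := fixedField H ⊓ F)
        ⟨(mem_fixedField_iff _ _).mpr (hr k), (r.coeff k).2⟩
    · exact le_sup_right (b := K⟮z⟯) (mem_adjoin_simple_self K z)
  exact div_mem (aeval_mem p fun k g hg => (coeff_fixed k g hg).1)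
    (aeval_mem q fun k g hg => (coeff_fixed k g hg).2)

lemma map_fixedField_eq_of_commute {H : Subgroup Gal(L/K)} (φ : Gal(L/K))
    (hφ : ∀ g ∈ H, Commute φ g) : (fixedField H).map (φ : L →ₐ[K] L) = fixedField H := by
  have map_mem_iff (y : L) : φ y ∈ fixedField H ↔ y ∈ fixedField H := by
    simp only [mem_fixedField_iff]
    refine forall₂_congr fun g hg => ?_
    rw [← φ.injective.eq_iff (a := g y), ← AlgEquiv.mul_apply, ← AlgEquiv.mul_apply, (hφ g hg).eq]
  ext x
  obtain ⟨y, rfl⟩ := φ.surjective x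
  rw [map_mem_iff]
  exact φ.injective.mem_set_image

end FixedFields

section RationalGenerators

open IntermediateField

variable {K L : Type*} [Field K] [Field L] [Algebra K L]

lemma algebraicIndependent_snoc {F : IntermediateField K L} {m : ℕ} {t : Fin m → L} {z : L}
    (ht : AlgebraicIndependent K t) (htF : ∀ i, t i ∈ F) (hz : Transcendental F z) :
    AlgebraicIndependent K (Fin.snoc t z : Fin (m + 1) → L) := by
  have hsum : AlgebraicIndependent K (Sum.elim (fun _ : Unit => z) t) :=
    ht.sumElim_of_tower (S := F) (Set.range_subset_iff.mpr fun i => ⟨⟨t i, htF i⟩, rfl⟩)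
      (algebraicIndependent_unique_type_iff.mpr hz)
  let e : Fin (m + 1) → Unit ⊕ Fin m := Fin.snoc Sum.inr (Sum.inl ())
  have he : Function.Injective e :=
    Fin.snoc_injective_iff.mpr ⟨Sum.inr_injective, by simp⟩
  convert hsum.comp e he
  ext i
  cases i using Fin.lastCases <;> simp [e]

lemma adjoin_range_snoc {m : ℕ} (t : Fin m → L) (z : L) :
    adjoin K (Set.range (Fin.snoc t z : Fin (m + 1) → L)) = adjoin K (Set.range t) ⊔ K⟮z⟯ := by
  rw [Fin.range_snoc, Set.insert_eq, adjoin_union, sup_comm]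

lemma adjoin_range_mul_sup_adjoin_simple {ι : Type*} (u : ι → L) {z : L} (hz : z ≠ 0) :
    adjoin K (Set.range fun i => z * u i) ⊔ K⟮z⟯ = adjoin K (Set.range u) ⊔ K⟮z⟯ := by
  have z_mem (M : IntermediateField K L) : z ∈ M ⊔ K⟮z⟯ :=
    le_sup_right (a := M) (mem_adjoin_simple_self K z)
  refine le_antisymm (sup_le (adjoin_le_iff.mpr ?_) le_sup_right)
    (sup_le (adjoin_le_iff.mpr ?_) le_sup_right) <;> rintro _ ⟨i, rfl⟩
  · exact mul_mem (z_mem _) (le_sup_left (a := adjoin K (Set.range u))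
      (subset_adjoin K _ ⟨i, rfl⟩))
  · rw [← mul_div_cancel_left₀ (u i) hz]
    exact div_mem (le_sup_left (a := adjoin K (Set.range fun i => z * u i))
      (subset_adjoin K _ ⟨i, rfl⟩)) (z_mem _)

lemma isAlgebraic_algebra_adjoin_of_adjoin_eq_top {s : Set L} (hs : adjoin K s = ⊤) :
    Algebra.IsAlgebraic (Algebra.adjoin K s) L := by
  rw [← isAlgebraic_adjoin_iff_top, hs]
  exact ⟨fun x => isAlgebraic_algebraMap (⟨x, mem_top⟩ : (⊤ : IntermediateField K L))⟩

lemma card_le_of_algebraicIndependent_of_adjoin_eq_top {m n : ℕ} {t : Fin m → L} {y : Fin n → L}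
    (ht : AlgebraicIndependent K t) (hy : adjoin K (Set.range y) = ⊤) : m ≤ n := by
  have := isAlgebraic_algebra_adjoin_of_adjoin_eq_top hy
  have h_trdeg : Algebra.trdeg K L ≤ n :=
    (Algebra.IsAlgebraic.trdeg_le_cardinalMk K (Set.range y)).trans
      (by simpa using Cardinal.mk_range_le_lift (f := y))
  simpa using ht.lift_cardinalMk_le_trdeg.trans (Cardinal.lift_le.mpr h_trdeg)

lemma algebraicIndependent_of_adjoin_eq_top {ι : Type*} [Finite ι] {x y : ι → L}
    (hx : AlgebraicIndependent K x) (hy : adjoin K (Set.range y) = ⊤) :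
    AlgebraicIndependent K y :=
  have := isAlgebraic_algebra_adjoin_of_adjoin_eq_top hy
  (Algebra.IsAlgebraic.isTranscendenceBasis_of_lift_le_trdeg_of_finite K y
    hx.lift_cardinalMk_le_trdeg).1

end RationalGenerators

section IsRatExt

open IntermediateField

variable {K : Type} [Field K] {L : Type*} [Field L] [Algebra K L]

lemma isRatExt_iff_exists_adjoin_eq {E : IntermediateField K L} :
    IsRatExt K E ↔ ∃ (m : ℕ) (t : Fin m → L), AlgebraicIndependent K t ∧
      adjoin K (Set.range t) = E := by
  have adjoin_eq_top_iff {m : ℕ} (t : Fin m → E) :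
      adjoin K (Set.range t) = ⊤ ↔ adjoin K (Set.range (E.val ∘ t)) = E := by
    rw [← (map_injective E.val).eq_iff, adjoin_map, ← Set.range_comp, ← AlgHom.fieldRange_eq_map,
      fieldRange_val]
  constructor
  · rintro ⟨m, t, ht, htop⟩
    exact ⟨m, E.val ∘ t, ht.map' E.val.injective, (adjoin_eq_top_iff t).mp htop⟩
  · rintro ⟨m, t, ht, htE⟩
    let s : Fin m → E := fun i => ⟨t i, htE.le (subset_adjoin K _ ⟨i, rfl⟩)⟩
    exact ⟨m, s, ht.of_comp E.val, (adjoin_eq_top_iff s).mpr htE⟩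

end IsRatExt

section Homogeneous

open MvPolynomial

variable {K : Type} [Field K] {I : Type}

lemma isHomogRat_algebraMap (c : K) : IsHomogRat K I (algebraMap K (RFF K I) c) 0 :=
  ⟨0, 0, C c, 1, isHomogeneous_C I c, isHomogeneous_one I K, one_ne_zero, by simp, by
    rw [map_one, div_one, ← algebraMap_eq, ← IsScalarTower.algebraMap_apply]⟩

lemma isHomogRat_Xvar (i : I) : IsHomogRat K I (Xvar K I i) 1 :=
  ⟨1, 0, X i, 1, isHomogeneous_X K i, isHomogeneous_one I K, one_ne_zero, by simp, by simp [Xvar]⟩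

namespace IsHomogRat

variable {f g : RFF K I} {d e : ℤ}

lemma add (hf : IsHomogRat K I f d) (hg : IsHomogRat K I g d) : IsHomogRat K I (f + g) d := by
  obtain ⟨a, b, p, q, hp, hq, hq0, hd, rfl⟩ := hf
  obtain ⟨a', b', p', q', hp', hq', hq0', hd', rfl⟩ := hg
  have hdeg : b + a' = a + b' := by lia
  refine ⟨a + b', b + b', p * q' + q * p', q * q', (hp.mul hq').add (hdeg ▸ hq.mul hp'),
    hq.mul hq', mul_ne_zero hq0 hq0', by lia, ?_⟩
  rw [div_add_div _ _ (by simpa using hq0) (by simpa using hq0')]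
  simp only [map_add, map_mul]

lemma mul (hf : IsHomogRat K I f d) (hg : IsHomogRat K I g e) : IsHomogRat K I (f * g) (d + e) := by
  obtain ⟨a, b, p, q, hp, hq, hq0, rfl, rfl⟩ := hf
  obtain ⟨a', b', p', q', hp', hq', hq0', rfl, rfl⟩ := hg
  exact ⟨a + a', b + b', p * p', q * q', hp.mul hp', hq.mul hq', mul_ne_zero hq0 hq0',
    by push_cast; ring, by rw [div_mul_div_comm, map_mul, map_mul]⟩

lemma inv (hf : IsHomogRat K I f d) (hf0 : f ≠ 0) : IsHomogRat K I f⁻¹ (-d) := by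
  obtain ⟨a, b, p, q, hp, hq, -, rfl, rfl⟩ := hf
  have hp0 : p ≠ 0 := by rintro rfl; simp at hf0
  exact ⟨b, a, q, p, hq, hp, hp0, by ring, inv_div _ _⟩

end IsHomogRat

variable (K I) in
/-- The subfield of `K(x_i : i ∈ I)` formed by the homogeneous rational functions of degree `0`. -/
def homogZeroField : IntermediateField K (RFF K I) where
  carrier := {f | IsHomogRat K I f 0}
  add_mem' hf hg := hf.add hg
  mul_mem' hf hg := by simpa using hf.mul hg
  algebraMap_mem' := isHomogRat_algebraMap
  inv_mem' f hf := by
    obtain rfl | hf0 := eq_or_ne f 0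
    · rwa [inv_zero]
    · simpa using hf.inv hf0

end Homogeneous

section RationalFunctionField

open IntermediateField

variable (K : Type) [Field K]

lemma algebraicIndependent_Xvar (I : Type) : AlgebraicIndependent K (Xvar K I) :=
  (MvPolynomial.algebraicIndependent_X I K).map'
    (f := IsScalarTower.toAlgHom K (MvPolynomial I K) (RFF K I))
    (IsFractionRing.injective (MvPolynomial I K) (RFF K I))

lemma adjoin_range_Xvar (I : Type) : adjoin K (Set.range (Xvar K I)) = ⊤ := by
  refine eq_top_iff.mpr fun f _ => mem_adjoin_range_iff K (Xvar K I) f |>.mpr ?_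
  obtain ⟨p, q, -, rfl⟩ := IsFractionRing.div_surjective (MvPolynomial I K) f
  have aeval_Xvar (r : MvPolynomial I K) :
      MvPolynomial.aeval (Xvar K I) r = algebraMap (MvPolynomial I K) (RFF K I) r :=
    (MvPolynomial.comp_aeval_apply (R := K) MvPolynomial.X
      (IsScalarTower.toAlgHom K (MvPolynomial I K) (RFF K I)) r).symm.trans (by simp)
  exact ⟨p, q, by rw [aeval_Xvar, aeval_Xvar]⟩

variable {K} {I : Type}

/-- The change of variables `x_i ↦ y_i` of `K(x_i : i ∈ I)`, for algebraically independent
generators `y_i`. -/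
def changeVars {y : I → RFF K I} (hy : AlgebraicIndependent K y)
    (htop : adjoin K (Set.range y) = ⊤) : Gal(RFF K I/K) :=
  hy.aevalEquivField.trans ((equivOfEq htop).trans topEquiv)

lemma changeVars_Xvar {y : I → RFF K I} (hy : AlgebraicIndependent K y)
    (htop : adjoin K (Set.range y) = ⊤) (i : I) : changeVars hy htop (Xvar K I i) = y i := by
  simp [changeVars, Xvar]

lemma algEquiv_ext_Xvar {f g : Gal(RFF K I/K)} (h : ∀ i, f (Xvar K I i) = g (Xvar K I i)) :
    f = g :=
  AlgEquiv.coe_toAlgHom_injective <|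
    IsLocalization.algHom_ext (nonZeroDivisors (MvPolynomial I K)) (MvPolynomial.algHom_ext h)

end RationalFunctionField

section LinearAction

open IntermediateField

variable (K : Type) [Field K] (n : ℕ)

/-- The subfield `K(x₁,…,xₙ)` of `K(x₁,…,x_{n+1})`. -/
def initVarField : IntermediateField K (RFF K (Fin (n + 1))) :=
  adjoin K (Set.range fun i : Fin n => Xvar K (Fin (n + 1)) i.castSucc)

lemma Xvar_last_ne_zero : Xvar K (Fin (n + 1)) (Fin.last n) ≠ 0 :=
  (algebraicIndependent_Xvar K (Fin (n + 1))).ne_zero _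

lemma transcendental_Xvar_last :
    Transcendental (initVarField K n) (Xvar K (Fin (n + 1)) (Fin.last n)) := by
  rw [initVarField, transcendental_adjoin_iff]
  have := (algebraicIndependent_Xvar K (Fin (n + 1))).transcendental_adjoin
    (s := Set.range Fin.castSucc) (i := Fin.last n) (by simp)
  rwa [← Set.range_comp] at this

lemma initVarField_sup_adjoin_Xvar_last :
    initVarField K n ⊔ K⟮Xvar K (Fin (n + 1)) (Fin.last n)⟯ = ⊤ := by
  rw [initVarField, ← adjoin_range_snoc, ← adjoin_range_Xvar]
  exact congrArg (fun x => adjoin K (Set.range x)) (Fin.snoc_init_self (Xvar K (Fin (n + 1))))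

lemma adjoin_range_snoc_Xvar_div_last :
    adjoin K (Set.range (Fin.snoc
      (fun i : Fin n => Xvar K (Fin (n + 1)) i.castSucc / Xvar K (Fin (n + 1)) (Fin.last n))
      (Xvar K (Fin (n + 1)) (Fin.last n)) : Fin (n + 1) → RFF K (Fin (n + 1)))) = ⊤ := by
  have hz := Xvar_last_ne_zero K n
  rw [adjoin_range_snoc, ← adjoin_range_mul_sup_adjoin_simple _ hz,
    ← initVarField_sup_adjoin_Xvar_last, initVarField]
  simp only [mul_div_cancel₀ _ hz]

/-- The automorphism of `K(x₁,…,x_{n+1})` sending `x_i` to `x_i / x_{n+1}` for `i ≤ n` and fixing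
`x_{n+1}`. It turns rational functions of `x₁,…,xₙ` into homogeneous ones of degree `0`. -/
def divLast : Gal(RFF K (Fin (n + 1))/K) :=
  changeVars (algebraicIndependent_of_adjoin_eq_top (algebraicIndependent_Xvar K _)
    (adjoin_range_snoc_Xvar_div_last K n)) (adjoin_range_snoc_Xvar_div_last K n)

variable {K n}

lemma divLast_Xvar_castSucc (i : Fin n) : divLast K n (Xvar K (Fin (n + 1)) i.castSucc) =
    Xvar K (Fin (n + 1)) i.castSucc / Xvar K (Fin (n + 1)) (Fin.last n) := by
  rw [divLast, changeVars_Xvar, Fin.snoc_castSucc]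

lemma divLast_Xvar_last :
    divLast K n (Xvar K (Fin (n + 1)) (Fin.last n)) = Xvar K (Fin (n + 1)) (Fin.last n) := by
  rw [divLast, changeVars_Xvar, Fin.snoc_last]

lemma isHomogRat_divLast {f : RFF K (Fin (n + 1))} (hf : f ∈ initVarField K n) :
    IsHomogRat K (Fin (n + 1)) (divLast K n f) 0 := by
  have h_le : initVarField K n ≤ (homogZeroField K (Fin (n + 1))).comap
      (divLast K n : RFF K (Fin (n + 1)) →ₐ[K] RFF K (Fin (n + 1))) := by
    refine adjoin_le_iff.mpr ?_
    rintro _ ⟨i, rfl⟩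
    change IsHomogRat K _ (divLast K n _) 0
    rw [divLast_Xvar_castSucc, div_eq_mul_inv]
    exact (isHomogRat_Xvar _).mul ((isHomogRat_Xvar _).inv (Xvar_last_ne_zero K n))
  exact h_le hf

/-- The automorphisms of `K(x₁,…,x_{n+1})` acting linearly on `x₁,…,xₙ` and trivially on
`x_{n+1}`. -/
structure IsLinearFixingLast (g : Gal(RFF K (Fin (n + 1))/K)) : Prop where
  map_init : ∃ a : Fin n → Fin n → K, ∀ i : Fin n, g (Xvar K (Fin (n + 1)) i.castSucc) =
    ∑ j : Fin n, algebraMap K (RFF K (Fin (n + 1))) (a i j) * Xvar K (Fin (n + 1)) j.castSucc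
  map_last : g (Xvar K (Fin (n + 1)) (Fin.last n)) = Xvar K (Fin (n + 1)) (Fin.last n)

namespace IsLinearFixingLast

variable {g : Gal(RFF K (Fin (n + 1))/K)}

lemma map_mem_initVarField (hg : IsLinearFixingLast g) {f : RFF K (Fin (n + 1))}
    (hf : f ∈ initVarField K n) : g f ∈ initVarField K n := by
  have h_le : initVarField K n ≤ (initVarField K n).comap
      (g : RFF K (Fin (n + 1)) →ₐ[K] RFF K (Fin (n + 1))) := by
    obtain ⟨a, ha⟩ := hg.map_init
    refine adjoin_le_iff.mpr ?_
    rintro _ ⟨i, rfl⟩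
    change g _ ∈ initVarField K n
    rw [ha]
    exact sum_mem fun j _ => mul_mem (_root_.algebraMap_mem _ _) (subset_adjoin K _ ⟨j, rfl⟩)
  exact h_le hf

lemma commute_divLast (hg : IsLinearFixingLast g) : Commute (divLast K n) g := by
  obtain ⟨a, ha⟩ := hg.map_init
  refine algEquiv_ext_Xvar fun i => ?_
  rw [AlgEquiv.mul_apply, AlgEquiv.mul_apply]
  cases i using Fin.lastCases with
  | last => rw [hg.map_last, divLast_Xvar_last, hg.map_last]
  | cast i =>
    simp only [ha, divLast_Xvar_castSucc, map_div₀, hg.map_last, map_sum, map_mul,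
      AlgEquiv.commutes, Finset.sum_div, mul_div_assoc]

end IsLinearFixingLast

variable {H : Subgroup Gal(RFF K (Fin (n + 1))/K)}

lemma Xvar_last_mem_fixedField (hH : ∀ g ∈ H, IsLinearFixingLast g) :
    Xvar K (Fin (n + 1)) (Fin.last n) ∈ fixedField H :=
  (mem_fixedField_iff _ _).mpr fun g hg => (hH g hg).map_last

lemma fixedField_eq_inf_initVarField_sup (hH : ∀ g ∈ H, IsLinearFixingLast g) :
    fixedField H = fixedField H ⊓ initVarField K n ⊔ K⟮Xvar K (Fin (n + 1)) (Fin.last n)⟯ := by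
  rw [← fixedField_inf_sup_adjoin_simple (fun g hg _ => (hH g hg).map_mem_initVarField)
    (Xvar_last_mem_fixedField hH) (transcendental_Xvar_last K n),
    initVarField_sup_adjoin_Xvar_last, inf_top_eq]

lemma adjoin_range_mul_divLast_sup (hH : ∀ g ∈ H, IsLinearFixingLast g)
    {ι : Type*} {t : ι → RFF K (Fin (n + 1))}
    (ht : adjoin K (Set.range t) ⊔ K⟮Xvar K (Fin (n + 1)) (Fin.last n)⟯ = fixedField H) :
    adjoin K (Set.range fun i => Xvar K (Fin (n + 1)) (Fin.last n) * divLast K n (t i)) ⊔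
      K⟮Xvar K (Fin (n + 1)) (Fin.last n)⟯ = fixedField H := by
  rw [adjoin_range_mul_sup_adjoin_simple _ (Xvar_last_ne_zero K n),
    ← map_fixedField_eq_of_commute (divLast K n) fun g hg => (hH g hg).commute_divLast, ← ht,
    IntermediateField.map_sup, adjoin_map, adjoin_map, Set.image_singleton, ← Set.range_comp]
  exact congrArg (fun z => _ ⊔ K⟮z⟯) divLast_Xvar_last.symm

lemma isHomogRat_snoc_mul_divLast {m : ℕ} {t : Fin m → RFF K (Fin (n + 1))}
    (ht : ∀ i, t i ∈ initVarField K n) (i : Fin (m + 1)) :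
    IsHomogRat K (Fin (n + 1)) (Fin.snoc (α := fun _ => RFF K (Fin (n + 1)))
      (fun i => Xvar K (Fin (n + 1)) (Fin.last n) * divLast K n (t i))
      (Xvar K (Fin (n + 1)) (Fin.last n)) i) 1 := by
  cases i using Fin.lastCases with
  | last => simpa only [Fin.snoc_last] using isHomogRat_Xvar _
  | cast i => simpa only [Fin.snoc_castSucc, add_zero] using
      (isHomogRat_Xvar _).mul (isHomogRat_divLast (ht i))

end LinearAction

open IntermediateField in
theorem rational_add_trivial_variable_general (K : Type) [Field K] (n : ℕ)
    (G : Type*) [Group G]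
    (ρ : G →* (RFF K (Fin (n + 1)) ≃ₐ[K] RFF K (Fin (n + 1))))
    (hlin : ∀ g : G, ∃ a : Fin n → Fin n → K, ∀ i : Fin n,
      ρ g (Xvar K (Fin (n + 1)) i.castSucc) =
        ∑ j : Fin n, algebraMap K (RFF K (Fin (n + 1))) (a i j) * Xvar K (Fin (n + 1)) j.castSucc)
    (htriv : ∀ g : G, ρ g (Xvar K (Fin (n + 1)) (Fin.last n)) = Xvar K (Fin (n + 1)) (Fin.last n))
    (hrat : IsRatExt K ↥(fixedField ρ.range ⊓
      adjoin K (Set.range fun i : Fin n => Xvar K (Fin (n + 1)) i.castSucc))) :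
    IsRatExt K ↥(fixedField ρ.range) ∧
      ∃ v : Fin (n + 1) → RFF K (Fin (n + 1)),
        (∀ i, v i ∈ fixedField ρ.range) ∧
        (∀ i, IsHomogRat K (Fin (n + 1)) (v i) 1) ∧
        adjoin K (Set.range v) = fixedField ρ.range := by
  have hρ : ∀ g ∈ ρ.range, IsLinearFixingLast g := by
    rintro _ ⟨g, rfl⟩
    exact ⟨hlin g, htriv g⟩
  obtain ⟨m, t, ht, htE⟩ := isRatExt_iff_exists_adjoin_eq.mp hrat
  have ht_init (i : Fin m) : t i ∈ initVarField K n :=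
    (htE.le (subset_adjoin K _ ⟨i, rfl⟩)).2
  have hind := algebraicIndependent_snoc ht ht_init (transcendental_Xvar_last K n)
  have hfixed : adjoin K (Set.range t) ⊔ K⟮Xvar K (Fin (n + 1)) (Fin.last n)⟯ =
      fixedField ρ.range := by
    rw [htE]
    exact (fixedField_eq_inf_initVarField_sup hρ).symm
  refine ⟨isRatExt_iff_exists_adjoin_eq.mpr ⟨_, _, hind, (adjoin_range_snoc _ _).trans hfixed⟩, ?_⟩
  have hmn : m + 1 ≤ n + 1 :=
    card_le_of_algebraicIndependent_of_adjoin_eq_top hind (adjoin_range_Xvar K (Fin (n + 1)))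
  let u : Fin (m + 1) → RFF K (Fin (n + 1)) :=
    Fin.snoc (fun i => Xvar K (Fin (n + 1)) (Fin.last n) * divLast K n (t i))
      (Xvar K (Fin (n + 1)) (Fin.last n))
  -- The invariants of an infinite `G` may have `m < n`; generators are then repeated.
  let v : Fin (n + 1) → RFF K (Fin (n + 1)) := u ∘ Function.invFun (Fin.castLE hmn)
  have hv : adjoin K (Set.range v) = fixedField ρ.range := by
    rw [(Function.invFun_surjective (Fin.castLE_injective hmn)).range_comp, adjoin_range_snoc]
    exact adjoin_range_mul_divLast_sup hρ hfixed
  exact ⟨v, fun i => hv.le (subset_adjoin K _ ⟨i, rfl⟩),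
    fun i => isHomogRat_snoc_mul_divLast ht_init _, hv⟩

/-- **Adding a variable with trivial action to a linear action.**
Let `G` be a finite group acting on `K(x₁,…,xₙ,x_{n+1})` by `K`-automorphisms such that each
`g ∈ G` sends each of `x₁,…,xₙ` to a `K`-linear combination of `x₁,…,xₙ` and fixes the last
variable `x_{n+1}`. If the fixed field `K(x₁,…,xₙ)^G` (the `G`-invariant elements of the
subfield generated by `x₁,…,xₙ`) is `K`-rational, then the full fixed field
`K(x₁,…,x_{n+1})^G` is `K`-rational, and moreover it is generated over `K` by `n+1` rational
functions that are homogeneous of degree `1`. -/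
theorem rational_add_trivial_variable (K : Type) [Field K] (n : ℕ)
    (G : Type) [Group G] [Finite G]
    (ρ : G →* (RFF K (Fin (n + 1)) ≃ₐ[K] RFF K (Fin (n + 1))))
    (hlin : ∀ g : G, ∃ a : Fin n → Fin n → K, ∀ i : Fin n,
      ρ g (Xvar K (Fin (n + 1)) i.castSucc) =
        ∑ j : Fin n, algebraMap K (RFF K (Fin (n + 1))) (a i j) * Xvar K (Fin (n + 1)) j.castSucc)
    (htriv : ∀ g : G, ρ g (Xvar K (Fin (n + 1)) (Fin.last n)) = Xvar K (Fin (n + 1)) (Fin.last n))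
    (hrat : IsRatExt K ↥(IntermediateField.fixedField ρ.range ⊓
      IntermediateField.adjoin K (Set.range fun i : Fin n => Xvar K (Fin (n + 1)) i.castSucc))) :
    IsRatExt K ↥(IntermediateField.fixedField ρ.range) ∧
      ∃ v : Fin (n + 1) → RFF K (Fin (n + 1)),
        (∀ i, v i ∈ IntermediateField.fixedField ρ.range) ∧
        (∀ i, IsHomogRat K (Fin (n + 1)) (v i) 1) ∧
        IntermediateField.adjoin K (Set.range v) = IntermediateField.fixedField ρ.range :=
  rational_add_trivial_variable_general K n G ρ hlin htriv hrat
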